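/- For every integer g ≥ 7, the number of numerical semigroups with multiplicity 4, genus g, and Frobenius number congruent to 3 modulo 4 equals ⌊g/5⌋² − ⌊2g/5⌋² − (3/2)⌊(g+2)/3⌋² − (3/2)⌊(g+5)/6⌋² + ⌊g/5⌋ + (g − 1 − ⌊g/5⌋)·⌊2g/5⌋ + (g/2 − 3/4)·⌊g/2⌋ + (g + 1/2)·⌊(g+2)/3⌋ + (g + 1/2 − ⌊g/2⌋)·⌊(g+5)/6⌋ − 5g²/8 + 5g/8, where the expression is evaluated in ℚ (it is an integer). -/

import Mathlib

/-!
Let `S` be a numerical semigroup containing `m`. It is determined by its Kunz coordinates `k i`, for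
`i` a residue modulo `m`: the least element of `S` congruent to `i` is `k i * m + i`. Being closed
under addition, the genus and the class of the Frobenius number modulo `m` are all linear conditions
on `k`. For `m = 4`, `k = (0, x, y, z)`, genus `g` and Frobenius number `3` modulo `4` they cut out,
after eliminating `z = g - x - y`, a quadrilateral in the `(x, y)`-plane with vertices
`(g/2, 0)`, `(g/6, g/3)`, `(g/5, 2g/5)` and `(g/3, g/3)`. Its rows are intervals, of one shape for
`y ≤ g/3` and of another above. Extending the upper shape to all rows `0 < y ≤ 2g/5` gives a
triangle whose number of lattice points is the part of the formula involving `⌊g/5⌋` and `⌊2g/5⌋`;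
the correction in the rows `y ≤ g/3` gives the remaining terms, a polynomial in `g` for each residue
of `g` modulo `6`.
-/

/-- A numerical semigroup: a subset of ℕ containing 0, closed under addition,
with finite complement. -/
def IsNumericalSemigroup (S : Set ℕ) : Prop :=
  0 ∈ S ∧ (∀ a ∈ S, ∀ b ∈ S, a + b ∈ S) ∧ Sᶜ.Finite

/-- The genus: the number of gaps of `S`. -/
noncomputable def nsGenus (S : Set ℕ) : ℕ := Sᶜ.ncard

/-- The Frobenius number: the largest gap of `S`. -/
noncomputable def nsFrobenius (S : Set ℕ) : ℕ := sSup Sᶜ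

/-- The multiplicity: the least positive element of `S`. -/
noncomputable def nsMultiplicity (S : Set ℕ) : ℕ := sInf {n | n ∈ S ∧ n ≠ 0}

/-- A minimal generator: a nonzero element of `S` that is not a sum of two
nonzero elements of `S`. -/
def IsMinimalGenerator (S : Set ℕ) (n : ℕ) : Prop :=
  n ∈ S ∧ n ≠ 0 ∧ ¬ ∃ a b, a ∈ S ∧ b ∈ S ∧ a ≠ 0 ∧ b ≠ 0 ∧ a + b = n

/-- The embedding dimension: the number of minimal generators of `S`. -/
noncomputable def nsEmbDim (S : Set ℕ) : ℕ := {n | IsMinimalGenerator S n}.ncard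

/-- The number of numerical semigroups with multiplicity `m` and genus `g`. -/
noncomputable def numSgps (m g : ℕ) : ℕ :=
  {S : Set ℕ | IsNumericalSemigroup S ∧ nsMultiplicity S = m ∧ nsGenus S = g}.ncard

/-- The number of numerical semigroups with multiplicity `m`, genus `g`, and
Frobenius number congruent to `r` modulo 4. -/
noncomputable def numSgpsFrobMod4 (m g r : ℕ) : ℕ :=
  {S : Set ℕ | IsNumericalSemigroup S ∧ nsMultiplicity S = m ∧ nsGenus S = g ∧
    nsFrobenius S % 4 = r}.ncard

open Finset

section KunzCoordinates

variable {m : ℕ} [NeZero m]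

/-- The set with Kunz coordinates `k` modulo `m`: its least element congruent to `i` is
`k i * m + i`, and it is closed under adding `m`. The coordinate `k 0`, which vanishes for
semigroups, is kept so that the residues `Fin m` can be treated uniformly. -/
def kunzSet (k : Fin m → ℕ) : Set ℕ := {n | k (Fin.ofNat m n) ≤ n / m}

/-- The inequalities characterizing the Kunz coordinates of the numerical semigroups of
multiplicity `m`. -/
def IsKunzTuple (k : Fin m → ℕ) : Prop :=
  k 0 = 0 ∧ (∀ i, i ≠ 0 → k i ≠ 0) ∧ ∀ i j, k (i + j) ≤ k i + k j + (i + j : ℕ) / m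

theorem exists_eq_mul_add_val (m : ℕ) [NeZero m] (n : ℕ) : ∃ (q : ℕ) (i : Fin m), n = q * m + i :=
  ⟨n / m, Fin.ofNat m n, (Nat.div_add_mod' n m).symm⟩

theorem mul_add_mem_kunzSet_iff {k : Fin m → ℕ} {q : ℕ} {i : Fin m} :
    q * m + i ∈ kunzSet k ↔ k i ≤ q := by
  have h : (Nat.divModEquiv m) (q * m + i) = (q, i) := (Nat.divModEquiv m).apply_symm_apply (q, i)
  obtain ⟨hq, hi⟩ := Prod.ext_iff.1 h
  exact (congrArg₂ (k · ≤ ·) hi hq).to_iff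

theorem val_mem_kunzSet_iff {k : Fin m → ℕ} {i : Fin m} : (i : ℕ) ∈ kunzSet k ↔ k i = 0 := by
  simpa using mul_add_mem_kunzSet_iff (k := k) (q := 0) (i := i)

theorem add_mem_kunzSet_iff {k : Fin m → ℕ} {p q : ℕ} {i j : Fin m} :
    (p * m + i) + (q * m + j) ∈ kunzSet k ↔ k (i + j) ≤ p + q + (i + j : ℕ) / m := by
  have h : (p * m + i) + (q * m + j) = (p + q + (i + j : ℕ) / m) * m + (i + j : Fin m) := by
    rw [Fin.val_add]
    linarith [Nat.div_add_mod' (i + j : ℕ) m]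
  rw [h, mul_add_mem_kunzSet_iff]

theorem kunzSet_injective : Function.Injective (kunzSet (m := m)) := by
  intro k k' h
  funext i
  apply le_antisymm
  · exact mul_add_mem_kunzSet_iff.1 (h ▸ mul_add_mem_kunzSet_iff.2 le_rfl)
  · exact mul_add_mem_kunzSet_iff.1 (h ▸ mul_add_mem_kunzSet_iff.2 le_rfl)

theorem compl_kunzSet (k : Fin m → ℕ) :
    (kunzSet k)ᶜ = (univ.sigma fun i ↦ range (k i)).image fun p ↦ p.2 * m + p.1 := by
  ext n
  simp only [Set.mem_compl_iff, coe_image, Set.mem_image, mem_coe, mem_sigma, mem_univ, mem_range,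
    true_and]
  constructor
  · obtain ⟨q, i, rfl⟩ := exists_eq_mul_add_val m n
    exact fun h ↦ ⟨⟨i, q⟩, not_le.1 (mt mul_add_mem_kunzSet_iff.2 h), rfl⟩
  · rintro ⟨⟨i, q⟩, hq, rfl⟩
    exact mt mul_add_mem_kunzSet_iff.1 hq.not_ge

theorem finite_compl_kunzSet (k : Fin m → ℕ) : (kunzSet k)ᶜ.Finite := by
  rw [compl_kunzSet]
  exact finite_toSet _

theorem nsGenus_kunzSet (k : Fin m → ℕ) : nsGenus (kunzSet k) = ∑ i, k i := by
  have hinj : Function.Injective fun p : Σ _ : Fin m, ℕ ↦ p.2 * m + p.1 := by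
    rintro ⟨i, p⟩ ⟨j, q⟩ h
    have hpair : (p, i) = (q, j) := (Nat.divModEquiv m).symm.injective h
    cases hpair
    rfl
  rw [nsGenus, compl_kunzSet, Set.ncard_coe_finset, card_image_of_injective _ hinj, card_sigma]
  simp only [card_range]

theorem isNumericalSemigroup_kunzSet_iff {k : Fin m → ℕ} :
    IsNumericalSemigroup (kunzSet k) ↔
      k 0 = 0 ∧ ∀ i j, k (i + j) ≤ k i + k j + (i + j : ℕ) / m := by
  refine ⟨fun ⟨h0, hadd, _⟩ ↦ ⟨val_mem_kunzSet_iff.1 h0, fun i j ↦ ?_⟩,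
    fun ⟨h0, hadd⟩ ↦ ⟨val_mem_kunzSet_iff (i := 0).2 h0, fun a ha b hb ↦ ?_,
      finite_compl_kunzSet k⟩⟩
  · exact add_mem_kunzSet_iff.1 <|
      hadd _ (mul_add_mem_kunzSet_iff.2 le_rfl) _ (mul_add_mem_kunzSet_iff.2 le_rfl)
  · obtain ⟨p, i, rfl⟩ := exists_eq_mul_add_val m a
    obtain ⟨q, j, rfl⟩ := exists_eq_mul_add_val m b
    rw [mul_add_mem_kunzSet_iff] at ha hb
    rw [add_mem_kunzSet_iff]
    exact (hadd i j).trans (by gcongr)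

theorem nsMultiplicity_eq_iff {S : Set ℕ} :
    nsMultiplicity S = m ↔ m ∈ S ∧ ∀ i : Fin m, i ≠ 0 → (i : ℕ) ∉ S := by
  constructor
  · rintro rfl
    have hpos : 0 < nsMultiplicity S := NeZero.pos _
    refine ⟨(Nat.sInf_mem (Nat.nonempty_of_pos_sInf hpos)).1, fun i hi hiS ↦ ?_⟩
    exact Nat.notMem_of_lt_sInf i.isLt ⟨hiS, Fin.val_ne_zero_iff.2 hi⟩
  · rintro ⟨hm, hlt⟩
    have hleast : IsLeast {n | n ∈ S ∧ n ≠ 0} m := by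
      refine ⟨⟨hm, NeZero.ne m⟩, fun n ⟨hn, hn0⟩ ↦ ?_⟩
      by_contra! hnm
      exact hlt ⟨n, hnm⟩ (Fin.val_ne_zero_iff.1 hn0) hn
    exact hleast.csInf_eq

theorem nsMultiplicity_kunzSet_eq_iff {k : Fin m → ℕ} (h0 : k 0 = 0) :
    nsMultiplicity (kunzSet k) = m ↔ ∀ i, i ≠ 0 → k i ≠ 0 := by
  have hm : m ∈ kunzSet k := by
    simpa [h0] using mul_add_mem_kunzSet_iff (k := k) (q := 1) (i := 0)
  simp only [nsMultiplicity_eq_iff, hm, val_mem_kunzSet_iff, true_and, ne_eq]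

theorem IsNumericalSemigroup.exists_mul_add_mem_iff {S : Set ℕ} (hS : IsNumericalSemigroup S)
    (hm : m ∈ S) (i : ℕ) : ∃ c, ∀ q, q * m + i ∈ S ↔ c ≤ q := by
  have hne : {q | q * m + i ∈ S}.Nonempty := by
    obtain ⟨N, hN⟩ := hS.2.2.bddAbove
    refine ⟨N + 1, by_contra fun hgap ↦ ?_⟩
    have hle : (N + 1) * m + i ≤ N := hN hgap
    have hlt : N + 1 ≤ (N + 1) * m := Nat.le_mul_of_pos_right _ (NeZero.pos m)
    omega
  refine ⟨sInf {q | q * m + i ∈ S}, fun q ↦ ⟨fun hq ↦ Nat.sInf_le hq, fun hq ↦ ?_⟩⟩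
  induction q, hq using Nat.le_induction with
  | base => exact Nat.sInf_mem hne
  | succ q _ ih =>
    rw [show (q + 1) * m + i = q * m + i + m by ring]
    exact hS.2.1 _ ih _ hm

theorem IsNumericalSemigroup.exists_kunzSet_eq {S : Set ℕ} (hS : IsNumericalSemigroup S)
    (hm : m ∈ S) : ∃ k : Fin m → ℕ, kunzSet k = S := by
  choose k hk using fun i : Fin m ↦ hS.exists_mul_add_mem_iff hm i
  refine ⟨k, Set.ext fun n ↦ ?_⟩
  obtain ⟨q, i, rfl⟩ := exists_eq_mul_add_val m n
  rw [mul_add_mem_kunzSet_iff, hk]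

theorem bijOn_kunzSet : Set.BijOn kunzSet {k : Fin m → ℕ | IsKunzTuple k}
    {S | IsNumericalSemigroup S ∧ nsMultiplicity S = m} := by
  refine ⟨fun k ⟨h0, hpos, hadd⟩ ↦ ?_, kunzSet_injective.injOn, fun S ⟨hS, hmult⟩ ↦ ?_⟩
  · exact ⟨isNumericalSemigroup_kunzSet_iff.2 ⟨h0, hadd⟩, (nsMultiplicity_kunzSet_eq_iff h0).2 hpos⟩
  · obtain ⟨k, rfl⟩ := hS.exists_kunzSet_eq (nsMultiplicity_eq_iff.1 hmult).1
    obtain ⟨h0, hadd⟩ := isNumericalSemigroup_kunzSet_iff.1 hS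
    exact ⟨k, ⟨h0, (nsMultiplicity_kunzSet_eq_iff h0).1 hmult, hadd⟩, rfl⟩

/-- Selmer's formula: the numbers `k i * m + i` form the Apéry set with respect to `m`. -/
theorem isGreatest_nsFrobenius_kunzSet_add {k : Fin m → ℕ} (hk : k ≠ 0) :
    IsGreatest (Set.range fun i ↦ k i * m + i) (nsFrobenius (kunzSet k) + m) := by
  have hgap {i : Fin m} {q : ℕ} : q * m + i ∈ (kunzSet k)ᶜ ↔ q < k i := by
    rw [Set.mem_compl_iff, mul_add_mem_kunzSet_iff, not_le]
  have hbdd : BddAbove (kunzSet k)ᶜ := (finite_compl_kunzSet k).bddAbove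
  have hupper (i : Fin m) : k i * m + i ≤ nsFrobenius (kunzSet k) + m := by
    rcases hi : k i with _ | c
    · rw [zero_mul, zero_add]
      exact i.isLt.le.trans (Nat.le_add_left _ _)
    · have hc : c * m + i ≤ nsFrobenius (kunzSet k) := le_csSup hbdd (hgap.2 (by omega))
      rw [Nat.succ_mul]
      omega
  refine ⟨?_, Set.forall_mem_range.2 hupper⟩
  obtain ⟨r, hr⟩ := Function.ne_iff.1 hk
  obtain ⟨q, s, hF⟩ := exists_eq_mul_add_val m (nsFrobenius (kunzSet k))
  have hqs : q < k s := hgap.1 (hF ▸ Nat.sSup_mem ⟨_, hgap.2 (Nat.pos_of_ne_zero hr)⟩ hbdd)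
  refine ⟨s, le_antisymm (hupper s) ?_⟩
  calc nsFrobenius (kunzSet k) + m = (q + 1) * m + s := by rw [hF]; ring
    _ ≤ k s * m + s := by gcongr; exact hqs

theorem nsFrobenius_kunzSet_mod_eq_iff {k : Fin m → ℕ} (hk : k ≠ 0) {r : Fin m} :
    nsFrobenius (kunzSet k) % m = r ↔ ∀ i, k i * m + i ≤ k r * m + r := by
  obtain ⟨⟨s, hs⟩, hupper⟩ := isGreatest_nsFrobenius_kunzSet_add hk
  rw [mem_upperBounds, Set.forall_mem_range] at hupper
  dsimp only at hs
  have hmod (i : Fin m) : (k i * m + i) % m = i := Nat.mul_add_mod_of_lt i.isLt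
  have hF : nsFrobenius (kunzSet k) % m = s := by rw [← Nat.add_mod_right, ← hs, hmod]
  constructor
  · intro h
    obtain rfl : s = r := Fin.ext (hF.symm.trans h)
    exact hs ▸ hupper
  · intro h
    rw [hF, ← hmod s, le_antisymm (h s) (hs ▸ hupper r), hmod]

end KunzCoordinates

section MultiplicityFour

theorem isKunzTuple_vecCons_iff {x y z : ℕ} :
    IsKunzTuple ![0, x, y, z] ↔ x ≠ 0 ∧ y ≠ 0 ∧ z ≠ 0 ∧
      y ≤ 2 * x ∧ z ≤ x + y ∧ y ≤ 2 * z + 1 ∧ x ≤ y + z + 1 := by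
  constructor
  · rintro ⟨-, hpos, hadd⟩
    have h₁₁ : y ≤ x + x + (1 + 1) / 4 := hadd 1 1
    have h₁₂ : z ≤ x + y + (1 + 2) / 4 := hadd 1 2
    have h₃₃ : y ≤ z + z + (3 + 3) / 4 := hadd 3 3
    have h₂₃ : x ≤ y + z + (2 + 3) / 4 := hadd 2 3
    refine ⟨hpos 1 (by decide), hpos 2 (by decide), hpos 3 (by decide), ?_⟩
    omega
  · rintro ⟨hx, hy, hz, h₁₁, h₁₂, h₃₃, h₂₃⟩
    refine ⟨rfl, fun i hi ↦ ?_, fun i j ↦ ?_⟩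
    · fin_cases i <;> simp_all
    · fin_cases i <;> fin_cases j <;> simp <;> omega

/-- The pairs `(x, y)` such that `(0, x, y, g - x - y)` are the Kunz coordinates of a semigroup of
multiplicity `4`, genus `g` and Frobenius number `3` modulo `4`. -/
def kunzPairs (g : ℕ) : Finset (ℕ × ℕ) :=
  {p ∈ range (g + 1) ×ˢ Icc 1 g |
    p.2 ≤ 2 * p.1 ∧ g ≤ 2 * p.1 + 2 * p.2 ∧ 2 * p.1 + p.2 ≤ g ∧ p.1 + 2 * p.2 ≤ g}

theorem mem_kunzPairs {g x y : ℕ} : (x, y) ∈ kunzPairs g ↔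
    1 ≤ y ∧ y ≤ 2 * x ∧ g ≤ 2 * x + 2 * y ∧ 2 * x + y ≤ g ∧ x + 2 * y ≤ g := by
  simp only [kunzPairs, mem_filter, mem_product, mem_range, mem_Icc]
  omega

theorem numSgpsFrobMod4_four_eq_ncard (g : ℕ) (r : Fin 4) :
    numSgpsFrobMod4 4 g r =
      {k : Fin 4 → ℕ | IsKunzTuple k ∧ ∑ i, k i = g ∧ ∀ i, k i * 4 + i ≤ k r * 4 + r}.ncard := by
  have hfrob {k : Fin 4 → ℕ} (hk : IsKunzTuple k) :
      nsFrobenius (kunzSet k) % 4 = r ↔ ∀ i, k i * 4 + i ≤ k r * 4 + r :=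
    nsFrobenius_kunzSet_mod_eq_iff fun h ↦ hk.2.1 1 one_ne_zero (congrFun h 1)
  rw [numSgpsFrobMod4, ← Set.ncard_image_of_injective _ kunzSet_injective]
  congr 1
  ext S
  constructor
  · rintro ⟨hS, hmult, hgenus, hF⟩
    obtain ⟨k, hk, rfl⟩ := bijOn_kunzSet.surjOn ⟨hS, hmult⟩
    exact ⟨k, ⟨hk, nsGenus_kunzSet k ▸ hgenus, (hfrob hk).1 hF⟩, rfl⟩
  · rintro ⟨k, ⟨hk, hgenus, hF⟩, rfl⟩
    obtain ⟨hS, hmult⟩ := bijOn_kunzSet.mapsTo hk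
    exact ⟨hS, hmult, (nsGenus_kunzSet k).trans hgenus, (hfrob hk).2 hF⟩

theorem bijOn_kunzPairs (g : ℕ) :
    Set.BijOn (fun p : ℕ × ℕ ↦ ![0, p.1, p.2, g - p.1 - p.2]) (kunzPairs g)
      {k : Fin 4 → ℕ | IsKunzTuple k ∧ ∑ i, k i = g ∧ ∀ i, k i * 4 + i ≤ k 3 * 4 + 3} := by
  have hmax {x y z : ℕ} : (∀ i, ![0, x, y, z] i * 4 + i ≤ ![0, x, y, z] 3 * 4 + 3) ↔
      x ≤ z ∧ y ≤ z := by
    refine ⟨fun h ↦ ?_, fun h i ↦ ?_⟩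
    · have h₁ : x * 4 + 1 ≤ z * 4 + 3 := h 1
      have h₂ : y * 4 + 2 ≤ z * 4 + 3 := h 2
      omega
    · fin_cases i <;> simp <;> omega
  have hsum (x y z : ℕ) : ∑ i, ![0, x, y, z] i = x + y + z := by
    simp [Fin.sum_univ_four]
  refine ⟨?_, ?_, ?_⟩
  · rintro ⟨x, y⟩ hp
    rw [mem_coe, mem_kunzPairs] at hp
    rw [Set.mem_ofPred_eq, isKunzTuple_vecCons_iff, hsum, hmax]
    omega
  · rintro ⟨x, y⟩ - ⟨x', y'⟩ - h
    exact Prod.ext (congrFun h 1) (congrFun h 2)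
  · rintro k ⟨hk, hg, hz⟩
    obtain ⟨x, y, z, rfl⟩ : ∃ x y z, k = ![0, x, y, z] :=
      ⟨k 1, k 2, k 3, by ext i; fin_cases i <;> simp [hk.1]⟩
    rw [isKunzTuple_vecCons_iff] at hk
    rw [hsum] at hg
    rw [hmax] at hz
    refine ⟨(x, y), mem_kunzPairs.2 (by omega), ?_⟩
    dsimp only
    rw [show g - x - y = z by omega]

theorem numSgpsFrobMod4_four_three (g : ℕ) : numSgpsFrobMod4 4 g 3 = #(kunzPairs g) := by
  rw [← Set.ncard_coe_finset, (bijOn_kunzPairs g).ncard_eq]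
  exact numSgpsFrobMod4_four_eq_ncard g 3

theorem card_kunzPairs_row_of_le {g y : ℕ} (hy : 1 ≤ y) (hyg : 3 * y ≤ g) :
    #{p ∈ kunzPairs g | p.2 = y} = (y + 2 - g % 2) / 2 := by
  have hrow : {p ∈ kunzPairs g | p.2 = y} = Icc ((g + 1) / 2 - y) ((g - y) / 2) ×ˢ {y} := by
    ext ⟨x, y'⟩
    simp only [mem_filter, mem_kunzPairs, mem_product, mem_Icc, mem_singleton]
    omega
  rw [hrow, card_product, card_singleton, Nat.card_Icc]
  omega

/-- The number of `x` with `y / 2 ≤ x ≤ g - 2 * y`, which is the size of the row of `kunzPairs g` at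
height `y` when `g / 3 ≤ y ≤ 2 * g / 5`. It is rational-valued so that the subtractions do not
truncate and the sums over rows can be compared with the floor formula. -/
def upperRowCard (g y : ℕ) : ℚ := g + 1 - 2 * y - ((y + 1) / 2 : ℕ)

theorem card_kunzPairs_row_of_ge {g y : ℕ} (hy : 1 ≤ y) (hgy : g ≤ 3 * y) (hyg : 5 * y ≤ 2 * g) :
    #{p ∈ kunzPairs g | p.2 = y} = upperRowCard g y := by
  have hrow : {p ∈ kunzPairs g | p.2 = y} = Icc ((y + 1) / 2) (g - 2 * y) ×ˢ {y} := by
    ext ⟨x, y'⟩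
    simp only [mem_filter, mem_kunzPairs, mem_product, mem_Icc, mem_singleton]
    omega
  have hcard : #{p ∈ kunzPairs g | p.2 = y} + 2 * y + (y + 1) / 2 = g + 1 := by
    rw [hrow, card_product, card_singleton, Nat.card_Icc]
    omega
  rw [upperRowCard, eq_sub_iff_add_eq, eq_sub_iff_add_eq, add_right_comm]
  exact_mod_cast hcard

theorem card_kunzPairs_eq_sum (g : ℕ) :
    (#(kunzPairs g) : ℚ) = ∑ y ∈ Ioc 0 (2 * g / 5), upperRowCard g y +
      ∑ y ∈ Ioc 0 (g / 3), (#{p ∈ kunzPairs g | p.2 = y} - upperRowCard g y) := by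
  have hfiber : #(kunzPairs g) = ∑ y ∈ Ioc 0 (2 * g / 5), #{p ∈ kunzPairs g | p.2 = y} := by
    refine card_eq_sum_card_fiberwise fun ⟨x, y⟩ hp ↦ ?_
    rw [mem_coe, mem_kunzPairs] at hp
    rw [mem_coe, mem_Ioc]
    omega
  have hupper : ∑ y ∈ Ioc (g / 3) (2 * g / 5), (#{p ∈ kunzPairs g | p.2 = y} : ℚ) =
      ∑ y ∈ Ioc (g / 3) (2 * g / 5), upperRowCard g y := by
    refine sum_congr rfl fun y hy ↦ ?_
    rw [mem_Ioc] at hy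
    exact card_kunzPairs_row_of_ge (by omega) (by omega) (by omega)
  have hsplit (f : ℕ → ℚ) : ∑ y ∈ Ioc 0 (2 * g / 5), f y =
      ∑ y ∈ Ioc 0 (g / 3), f y + ∑ y ∈ Ioc (g / 3) (2 * g / 5), f y :=
    (sum_Ioc_consecutive f (Nat.zero_le _) (by omega)).symm
  rw [hfiber, Nat.cast_sum, hsplit, hsplit, hupper, sum_sub_distrib]
  ring

theorem sum_Ioc_add_div_two (n c : ℕ) :
    ∑ j ∈ Ioc 0 n, (j + c) / 2 + c / 2 * ((c + 1) / 2) = (n + c) / 2 * ((n + c + 1) / 2) := by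
  induction n with
  | zero => simp
  | succ n ih =>
    have hstep : (n + 1 + c + 1) / 2 = (n + c) / 2 + 1 := by omega
    rw [sum_Ioc_succ_top n.zero_le, add_right_comm, ih, hstep, add_right_comm n 1 c]
    ring

theorem sum_upperRowCard (g n : ℕ) :
    ∑ y ∈ Ioc 0 n, upperRowCard g y =
      n * (g - n) - ((n + 1) / 2 : ℕ) * ((n + 2) / 2 : ℕ) := by
  have hlinear : ∑ y ∈ Ioc 0 n, ((g : ℚ) + 1 - 2 * y) = n * (g - n) := by
    induction n with
    | zero => simp
    | succ n ih =>
      rw [sum_Ioc_succ_top n.zero_le, ih]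
      push_cast
      ring
  have hhalves : ∑ y ∈ Ioc 0 n, (y + 1) / 2 = (n + 1) / 2 * ((n + 2) / 2) := by
    simpa only [Nat.reduceDiv, zero_mul, add_zero] using sum_Ioc_add_div_two n 1
  simp only [upperRowCard]
  rw [sum_sub_distrib, hlinear, ← Nat.cast_sum, hhalves, Nat.cast_mul]

theorem sum_upperRowCard_two_mul_div_five (g : ℕ) :
    ∑ y ∈ Ioc 0 (2 * g / 5), upperRowCard g y =
      (g / 5 : ℕ) ^ 2 - (2 * g / 5 : ℕ) ^ 2 + (g / 5 : ℕ) +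
        (g - 1 - (g / 5 : ℕ)) * (2 * g / 5 : ℕ) := by
  have hceil : (2 * g / 5 + 1) / 2 = 2 * g / 5 - g / 5 := by omega
  have hfloor : (2 * g / 5 + 2) / 2 = g / 5 + 1 := by omega
  rw [sum_upperRowCard, hceil, hfloor, Nat.cast_sub (by omega), Nat.cast_succ]
  ring

theorem sum_card_kunzPairs_row_div_three (g : ℕ) :
    ∑ y ∈ Ioc 0 (g / 3), #{p ∈ kunzPairs g | p.2 = y} + (1 - g % 2) =
      (g / 3 + 2 - g % 2) / 2 * ((g / 3 + 3 - g % 2) / 2) := by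
  have hrows : ∑ y ∈ Ioc 0 (g / 3), #{p ∈ kunzPairs g | p.2 = y} =
      ∑ y ∈ Ioc 0 (g / 3), (y + (2 - g % 2)) / 2 := by
    refine sum_congr rfl fun y hy ↦ ?_
    rw [mem_Ioc] at hy
    rw [card_kunzPairs_row_of_le (by omega) (by omega), Nat.add_sub_assoc (by omega)]
  have hinit : (2 - g % 2) / 2 * ((2 - g % 2 + 1) / 2) = 1 - g % 2 := by
    rcases Nat.mod_two_eq_zero_or_one g with h | h <;> simp [h]
  have hsum := sum_Ioc_add_div_two (g / 3) (2 - g % 2)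
  rw [hinit] at hsum
  rw [hrows, hsum]
  congr 2 <;> omega

theorem sum_card_kunzPairs_row_sub_upperRowCard (g : ℕ) :
    ∑ y ∈ Ioc 0 (g / 3), (#{p ∈ kunzPairs g | p.2 = y} - upperRowCard g y) =
      -(3 / 2) * ((g + 2) / 3 : ℕ) ^ 2 - 3 / 2 * ((g + 5) / 6 : ℕ) ^ 2 +
        (g / 2 - 3 / 4) * (g / 2 : ℕ) + (g + 1 / 2) * ((g + 2) / 3 : ℕ) +
        (g + 1 / 2 - (g / 2 : ℕ)) * ((g + 5) / 6 : ℕ) - 5 * g ^ 2 / 8 + 5 * g / 8 := by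
  have hlower := congrArg (Nat.cast : ℕ → ℚ) (sum_card_kunzPairs_row_div_three g)
  rw [Nat.cast_add, ← eq_sub_iff_add_eq, Nat.cast_sum] at hlower
  rw [sum_sub_distrib, hlower, sum_upperRowCard]
  obtain ⟨k, r, hr, rfl⟩ : ∃ k r, r < 6 ∧ g = 6 * k + r :=
    ⟨g / 6, g % 6, Nat.mod_lt _ (by norm_num), (Nat.div_add_mod _ _).symm⟩
  have hdiv₂ : (6 * k + r) / 2 = 3 * k + r / 2 := by omega
  have hmod₂ : (6 * k + r) % 2 = r % 2 := by omega
  have hdiv₃ : (6 * k + r) / 3 = 2 * k + r / 3 := by omega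
  have hceil₃ : (6 * k + r + 2) / 3 = 2 * k + (r + 2) / 3 := by omega
  have hceil₆ : (6 * k + r + 5) / 6 = k + (r + 5) / 6 := by omega
  have hhalf (s : ℕ) : (2 * k + s) / 2 = k + s / 2 := by omega
  rw [hdiv₂, hmod₂, hdiv₃, hceil₃, hceil₆]
  interval_cases r <;> norm_num [hhalf, add_assoc] <;> ring

end MultiplicityFour

theorem statement15_general (g : ℕ) :
    (numSgpsFrobMod4 4 g 3 : ℚ) =
      (⌊(g : ℚ) / 5⌋ : ℚ) ^ 2 - (⌊2 * (g : ℚ) / 5⌋ : ℚ) ^ 2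
        - (3 / 2) * (⌊((g : ℚ) + 2) / 3⌋ : ℚ) ^ 2 - (3 / 2) * (⌊((g : ℚ) + 5) / 6⌋ : ℚ) ^ 2
        + (⌊(g : ℚ) / 5⌋ : ℚ) + ((g : ℚ) - 1 - (⌊(g : ℚ) / 5⌋ : ℚ)) * (⌊2 * (g : ℚ) / 5⌋ : ℚ)
        + ((g : ℚ) / 2 - 3 / 4) * (⌊(g : ℚ) / 2⌋ : ℚ)
        + ((g : ℚ) + 1 / 2) * (⌊((g : ℚ) + 2) / 3⌋ : ℚ)
        + ((g : ℚ) + 1 / 2 - (⌊(g : ℚ) / 2⌋ : ℚ)) * (⌊((g : ℚ) + 5) / 6⌋ : ℚ)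
        - 5 * (g : ℚ) ^ 2 / 8 + 5 * (g : ℚ) / 8 := by
  have hfloor (a d : ℕ) : ⌊(a : ℚ) / d⌋ = (a / d : ℕ) :=
    (Rat.floor_natCast_div_natCast a d).trans (Int.natCast_div a d).symm
  have hfifth : ⌊(g : ℚ) / 5⌋ = (g / 5 : ℕ) := mod_cast hfloor g 5
  have htwoFifths : ⌊2 * (g : ℚ) / 5⌋ = (2 * g / 5 : ℕ) := mod_cast hfloor (2 * g) 5
  have hthird : ⌊((g : ℚ) + 2) / 3⌋ = ((g + 2) / 3 : ℕ) := mod_cast hfloor (g + 2) 3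
  have hsixth : ⌊((g : ℚ) + 5) / 6⌋ = ((g + 5) / 6 : ℕ) := mod_cast hfloor (g + 5) 6
  have hhalf : ⌊(g : ℚ) / 2⌋ = (g / 2 : ℕ) := mod_cast hfloor g 2
  rw [numSgpsFrobMod4_four_three, card_kunzPairs_eq_sum, sum_upperRowCard_two_mul_div_five,
    sum_card_kunzPairs_row_sub_upperRowCard, hfifth, htwoFifths, hthird, hsixth, hhalf]
  simp only [Int.cast_natCast]
  ring

/-- count of numerical semigroups with multiplicity 4, genus `g ≥ 7`, Frobenius number ≡ 3 (mod 4). -/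
theorem statement15 (g : ℕ) (hg : 7 ≤ g) :
    (numSgpsFrobMod4 4 g 3 : ℚ) =
      ((⌊(g : ℚ)/5⌋ : ℚ))^2 - ((⌊2*(g : ℚ)/5⌋ : ℚ))^2 - (3/2) * ((⌊((g : ℚ)+2)/3⌋ : ℚ))^2 - (3/2) * ((⌊((g : ℚ)+5)/6⌋ : ℚ))^2 + ((⌊(g : ℚ)/5⌋ : ℚ)) + ((g : ℚ) - 1 - ((⌊(g : ℚ)/5⌋ : ℚ))) * ((⌊2*(g : ℚ)/5⌋ : ℚ)) + ((g : ℚ)/2 - 3/4) * ((⌊(g : ℚ)/2⌋ : ℚ)) + ((g : ℚ) + 1/2) * ((⌊((g : ℚ)+2)/3⌋ : ℚ)) + ((g : ℚ) + 1/2 - ((⌊(g : ℚ)/2⌋ : ℚ))) * ((⌊((g : ℚ)+5)/6⌋ : ℚ)) - 5*(g : ℚ)^2/8 + 5*(g : ℚ)/8 := by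
  exact statement15_general g
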